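/- (Qudit two-sample test from independent-measurement tomography.) Let ρ and σ be density matrices on ℂ^d, let m, n ≥ 1 and k = min{m, n}, and let σ̂_m and ρ̂_n be random density matrices on ℂ^d on a common probability space such that for every δ ∈ (0,1), ℙ(‖σ̂_m − σ‖₁ ≥ δ) ≤ d·exp(−m·δ²/(86·d³)) and ℙ(‖ρ̂_n − ρ‖₁ ≥ δ) ≤ d·exp(−n·δ²/(86·d³)). Let α ∈ (0,1) with 2d ≥ α, set c = √(344·d³·ln(2d/α)/k), assume c/2 < 1, and accept H₀ iff ‖σ̂_m − ρ̂_n‖₁ ≤ c. Then: (i) if σ = ρ, the probability of rejecting H₀ is at most α; and (ii) if σ ≠ ρ, c < ‖ρ − σ‖₁, and (‖ρ − σ‖₁ − c)/2 < 1, the probability of accepting H₀ is at most 2d·exp(−k·(‖ρ − σ‖₁ − c)²/(344·d³)). -/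

import Mathlib

open Matrix MeasureTheory ProbabilityTheory
open scoped ComplexOrder

/-- The positive semidefinite square root of a matrix (junk value `0` if the matrix is not
positive semidefinite). -/
noncomputable def matSqrt {d : ℕ} (A : Matrix (Fin d) (Fin d) ℂ) : Matrix (Fin d) (Fin d) ℂ :=
  open scoped Classical in
  if h : A.PosSemidef then
    (h.1.eigenvectorUnitary : Matrix (Fin d) (Fin d) ℂ) *
      diagonal ((fun x : ℝ => (x : ℂ)) ∘ Real.sqrt ∘ h.1.eigenvalues) *
      (star h.1.eigenvectorUnitary : Matrix (Fin d) (Fin d) ℂ)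
  else 0

/-- The trace norm `‖A‖₁ = Tr[√(A†A)]`. -/
noncomputable def traceNorm {d : ℕ} (A : Matrix (Fin d) (Fin d) ℂ) : ℝ :=
  (matSqrt (Aᴴ * A)).trace.re

/-!
Write `|A| = √(AᴴA)`. The trace norm `Tr|A|` is dual to the operator norm: it is the maximum of
`Re Tr(WᴴA)` over contractions `W`, attained at the polar factor `V` of `A = V|A|`, so it satisfies
the triangle inequality. If the two estimates are `2ε`-far apart although the true states
agree, or `2ε`-closer together than the true states, then one of them is `ε`-far from its target;
the concentration hypotheses and a union bound do the rest.
-/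

section Matrix

open scoped MatrixOrder

variable {ι 𝕜 : Type*} [Fintype ι] [RCLike 𝕜]

theorem trace_mul_nonneg_of_nonneg {A B : Matrix ι ι 𝕜} (hA : 0 ≤ A) (hB : 0 ≤ B) :
    0 ≤ (A * B).trace := by
  classical
  have hsa : (CFC.sqrt A)ᴴ = CFC.sqrt A := (CFC.sqrt_nonneg A).posSemidef.1
  have h := (hB.posSemidef.mul_mul_conjTranspose_same (CFC.sqrt A)).trace_nonneg
  rwa [hsa, trace_mul_comm, ← mul_assoc, CFC.sqrt_mul_sqrt_self A hA] at h

theorem re_trace_conjTranspose_mul_mul_le [DecidableEq ι] {V W P : Matrix ι ι 𝕜} (hV : Vᴴ * V ≤ 1)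
    (hW : Wᴴ * W ≤ 1) (hP : 0 ≤ P) :
    RCLike.re (Wᴴ * V * P).trace ≤ RCLike.re P.trace := by
  have hsq : 0 ≤ 1 + 1 - Wᴴ * V - Vᴴ * W := by
    calc 0 ≤ (V - W)ᴴ * (V - W) := (posSemidef_conjTranspose_mul_self _).nonneg
      _ = Vᴴ * V + Wᴴ * W - Wᴴ * V - Vᴴ * W := by rw [conjTranspose_sub]; noncomm_ring
      _ ≤ 1 + 1 - Wᴴ * V - Vᴴ * W := by gcongr
  have hconj : RCLike.re (Vᴴ * W * P).trace = RCLike.re (Wᴴ * V * P).trace := by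
    rw [← RCLike.conj_re, starRingEnd_apply, ← trace_conjTranspose, conjTranspose_mul,
      conjTranspose_mul, conjTranspose_conjTranspose, hP.posSemidef.1.eq, trace_mul_comm]
  have h := (RCLike.nonneg_iff.1 (trace_mul_nonneg_of_nonneg hsq hP)).1
  simp only [sub_mul, add_mul, one_mul, trace_sub, trace_add, map_sub, map_add, hconj] at h
  linarith

theorem exists_isHermitian_pseudoinverse [DecidableEq ι] {A : Matrix ι ι 𝕜} (hA : A.IsHermitian) :
    ∃ B : Matrix ι ι 𝕜, B.IsHermitian ∧ A * B = B * A ∧ B * A * A = A ∧ B * A ≤ 1 := by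
  have hsa : IsSelfAdjoint A := hA
  have hcont (f : ℝ → ℝ) : ContinuousOn f (spectrum ℝ A) :=
    A.finite_real_spectrum.continuousOn f
  set B := cfc (fun x : ℝ => x⁻¹) A
  have hBA : B * A = cfc (fun x : ℝ => x⁻¹ * x) A := by
    rw [cfc_mul _ _ A (hcont _) (hcont _), cfc_id' ℝ A]
  have hAB : A * B = cfc (fun x : ℝ => x * x⁻¹) A := by
    rw [cfc_mul _ _ A (hcont _) (hcont _), cfc_id' ℝ A]
  refine ⟨B, cfc_predicate (fun x : ℝ => x⁻¹) A, ?_, ?_, ?_⟩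
  · simp only [hAB, hBA, mul_comm]
  · calc B * A * A = cfc (fun x : ℝ => x⁻¹ * x * x) A := by
          rw [hBA, cfc_mul (fun x => x⁻¹ * x) _ A (hcont _) (hcont _), cfc_id' ℝ A]
      _ = A := by simp only [inv_mul_mul_self, cfc_id' ℝ A]
  · rw [hBA]
    exact cfc_le_one _ A fun x _ => inv_mul_le_one

theorem exists_polar_decomposition [DecidableEq ι] (A : Matrix ι ι 𝕜) :
    ∃ V : Matrix ι ι 𝕜, Vᴴ * V ≤ 1 ∧ V * CFC.abs A = A ∧ Vᴴ * A = CFC.abs A := by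
  set P := CFC.abs A
  have hsq : Aᴴ * A = P * P := (CFC.abs_mul_abs A).symm
  obtain ⟨Q, hQ, hPQ, hQPP, hQP⟩ := exists_isHermitian_pseudoinverse (CFC.abs_nonneg A).posSemidef.1
  have hVA : (A * Q)ᴴ * A = P := by
    rw [conjTranspose_mul, hQ.eq, mul_assoc, hsq, ← mul_assoc, hQPP]
  refine ⟨A * Q, ?_, ?_, hVA⟩
  · rwa [← mul_assoc, hVA, hPQ]
  · have hker : Aᴴ * A * (Q * P - 1) = 0 := by
      rw [hsq, mul_assoc, mul_sub, ← mul_assoc P Q P, hPQ, hQPP, mul_one, sub_self, mul_zero]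
    have h : A * (Q * P - 1) = 0 := (conjTranspose_mul_self_mul_eq_zero A _).1 hker
    rwa [mul_sub, mul_one, sub_eq_zero, ← mul_assoc] at h

theorem re_trace_conjTranspose_mul_le_re_trace_abs [DecidableEq ι] (A : Matrix ι ι 𝕜)
    {W : Matrix ι ι 𝕜} (hW : Wᴴ * W ≤ 1) :
    RCLike.re (Wᴴ * A).trace ≤ RCLike.re (CFC.abs A).trace := by
  obtain ⟨V, hV, hVA, -⟩ := exists_polar_decomposition A
  nth_rw 1 [← hVA]
  rw [← mul_assoc]
  exact re_trace_conjTranspose_mul_mul_le hV hW (CFC.abs_nonneg A)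

theorem re_trace_abs_add_le [DecidableEq ι] (A B : Matrix ι ι 𝕜) :
    RCLike.re (CFC.abs (A + B)).trace ≤
      RCLike.re (CFC.abs A).trace + RCLike.re (CFC.abs B).trace := by
  obtain ⟨V, hV, -, hVAB⟩ := exists_polar_decomposition (A + B)
  rw [← hVAB, mul_add, trace_add, map_add]
  exact add_le_add (re_trace_conjTranspose_mul_le_re_trace_abs A hV)
    (re_trace_conjTranspose_mul_le_re_trace_abs B hV)

end Matrix

section TraceNorm

open scoped MatrixOrder

variable {d : ℕ}

theorem matSqrt_eq_cfcSqrt {A : Matrix (Fin d) (Fin d) ℂ} (hA : A.PosSemidef) :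
    matSqrt A = CFC.sqrt A := by
  rw [CFC.sqrt_eq_real_sqrt _ hA.nonneg, cfcₙ_eq_cfc, hA.1.cfc_eq, matSqrt, dif_pos hA,
    IsHermitian.cfc, Unitary.conjStarAlgAut_apply]
  rfl

theorem traceNorm_eq_re_trace_abs (A : Matrix (Fin d) (Fin d) ℂ) :
    traceNorm A = (CFC.abs A).trace.re := by
  rw [traceNorm, matSqrt_eq_cfcSqrt (posSemidef_conjTranspose_mul_self A)]
  rfl

/-- The trace norm as a seminorm on the additive group of matrices; homogeneity and definiteness
are left out because the two-sample test only compares distances. -/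
noncomputable def traceSeminorm (d : ℕ) : AddGroupSeminorm (Matrix (Fin d) (Fin d) ℂ) where
  toFun := traceNorm
  map_zero' := by rw [traceNorm_eq_re_trace_abs, CFC.abs_zero, trace_zero, Complex.zero_re]
  add_le' A B := by
    simp only [traceNorm_eq_re_trace_abs]
    exact re_trace_abs_add_le A B
  neg' A := by rw [traceNorm_eq_re_trace_abs, CFC.abs_neg, traceNorm_eq_re_trace_abs]

end TraceNorm

section Concentration

variable {Ω : Type*} [MeasurableSpace Ω] {μ : Measure Ω}

/-- The concentration hypothesis on the error `X` of a tomography scheme: a Gaussian tail with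
prefactor `C`, sample size `m` and variance scale `K`, for deviations in `(0, 1)` only. -/
def HasGaussianTail (μ : Measure Ω) (X : Ω → ℝ) (C m K : ℝ) : Prop :=
  ∀ δ ∈ Set.Ioo (0 : ℝ) 1, μ {ω | δ ≤ X ω} ≤ ENNReal.ofReal (C * Real.exp (-m * δ ^ 2 / K))

namespace HasGaussianTail

variable {X Y : Ω → ℝ} {C m n k K t : ℝ}

theorem mono (hX : HasGaussianTail μ X C m K) (hC : 0 ≤ C) (hK : 0 ≤ K) (hkm : k ≤ m) :
    HasGaussianTail μ X C k K := fun δ hδ =>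
  (hX δ hδ).trans (ENNReal.ofReal_le_ofReal (by gcongr))

theorem measure_le_of_le_add (hX : HasGaussianTail μ X C k K) (hY : HasGaussianTail μ Y C k K)
    (hC : 0 ≤ C) (ht : t / 2 ∈ Set.Ioo (0 : ℝ) 1) {s : Set Ω} (hs : ∀ ω ∈ s, t ≤ X ω + Y ω) :
    μ s ≤ ENNReal.ofReal (2 * C * Real.exp (-k * t ^ 2 / (4 * K))) := by
  have hsub : s ⊆ {ω | t / 2 ≤ X ω} ∪ {ω | t / 2 ≤ Y ω} := fun ω hω => by
    by_contra! h
    simp only [Set.mem_union, Set.mem_ofPred_eq, not_or, not_le] at h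
    linarith [hs ω hω, h.1, h.2]
  calc μ s ≤ μ {ω | t / 2 ≤ X ω} + μ {ω | t / 2 ≤ Y ω} :=
        (measure_mono hsub).trans (measure_union_le _ _)
    _ ≤ ENNReal.ofReal (C * Real.exp (-k * (t / 2) ^ 2 / K)) +
        ENNReal.ofReal (C * Real.exp (-k * (t / 2) ^ 2 / K)) := add_le_add (hX _ ht) (hY _ ht)
    _ = ENNReal.ofReal (2 * C * Real.exp (-k * t ^ 2 / (4 * K))) := by
        rw [← ENNReal.ofReal_add (by positivity) (by positivity)]
        ring_nf

end HasGaussianTail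

theorem two_mul_mul_exp_neg_sq_threshold_eq {C k K α c : ℝ} (hk : 0 < k) (hK : 0 < K) (hα : 0 < α)
    (hαC : α ≤ 2 * C) (hc : c = √(4 * K * Real.log (2 * C / α) / k)) :
    2 * C * Real.exp (-k * c ^ 2 / (4 * K)) = α := by
  have hC : 0 < C := by linarith
  have hlog : 0 ≤ Real.log (2 * C / α) := Real.log_nonneg ((one_le_div hα).2 hαC)
  have hexponent : -k * c ^ 2 / (4 * K) = -Real.log (2 * C / α) := by
    rw [hc, Real.sq_sqrt (by positivity)]
    field_simp
  rw [hexponent, Real.exp_neg, Real.exp_log (by positivity)]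
  field_simp

theorem qudit_two_sample_indep_general {E : Type*} [AddGroup E] (p : AddGroupSeminorm E)
    {x y : E} {xhat yhat : Ω → E} {C m n k K α c : ℝ}
    (hk : 0 < k) (hkm : k ≤ m) (hkn : k ≤ n) (hK : 0 < K)
    (hx : HasGaussianTail μ (fun ω => p (xhat ω - x)) C m K)
    (hy : HasGaussianTail μ (fun ω => p (yhat ω - y)) C n K)
    (hα : 0 < α) (hαC : α < 2 * C)
    (hc : c = √(4 * K * Real.log (2 * C / α) / k)) (hc1 : c / 2 < 1) :
    (x = y → μ {ω | c < p (xhat ω - yhat ω)} ≤ ENNReal.ofReal α) ∧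
    (c < p (y - x) → (p (y - x) - c) / 2 < 1 →
      μ {ω | p (xhat ω - yhat ω) ≤ c} ≤
        ENNReal.ofReal (2 * C * Real.exp (-k * (p (y - x) - c) ^ 2 / (4 * K)))) := by
  have hC : 0 ≤ C := by linarith
  replace hx := hx.mono hC hK.le hkm
  replace hy := hy.mono hC hK.le hkn
  refine ⟨fun hxy => ?_, fun hlt hlt1 => ?_⟩
  · subst hxy
    have hc0 : 0 < c := by
      have hlog : 0 < Real.log (2 * C / α) := Real.log_pos ((one_lt_div hα).2 hαC)
      exact hc ▸ Real.sqrt_pos.2 (by positivity)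
    rw [← two_mul_mul_exp_neg_sq_threshold_eq hk hK hα hαC.le hc]
    refine hx.measure_le_of_le_add hy hC ⟨by linarith, hc1⟩ fun ω hω => ?_
    calc c ≤ p (xhat ω - yhat ω) := le_of_lt hω
      _ ≤ p (xhat ω - x) + p (x - yhat ω) := le_map_sub_add_map_sub p _ _ _
      _ = p (xhat ω - x) + p (yhat ω - x) := by rw [map_sub_rev p x]
  · refine hx.measure_le_of_le_add hy hC ⟨by linarith, hlt1⟩ fun ω hω => ?_
    have htri : p (y - x) ≤ p (yhat ω - y) + p (xhat ω - yhat ω) + p (xhat ω - x) :=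
      calc p (y - x) ≤ p (y - xhat ω) + p (xhat ω - x) := le_map_sub_add_map_sub p _ _ _
        _ ≤ p (y - yhat ω) + p (yhat ω - xhat ω) + p (xhat ω - x) := by
            gcongr; exact le_map_sub_add_map_sub p _ _ _
        _ = p (yhat ω - y) + p (xhat ω - yhat ω) + p (xhat ω - x) := by
            rw [map_sub_rev p y, map_sub_rev p (yhat ω) (xhat ω)]
    rw [Set.mem_ofPred_eq] at hω
    linarith

end Concentration

/-- Qudit two-sample test from independent-measurement tomography: accepting `H₀` iff
`‖σ̂_m − ρ̂_n‖₁ ≤ c` with `c = √(344·d³·ln(2d/α)/k)`, `k = min{m,n}`, gives type I error at most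
`α` and type II error at most `2d·exp(−k·(‖ρ−σ‖₁−c)²/(344·d³))`. -/
theorem qudit_two_sample_indep
    {d : ℕ} (hd : 1 ≤ d)
    {Ω : Type*} [MeasurableSpace Ω] (μ : Measure Ω) [IsProbabilityMeasure μ]
    (ρ σ : Matrix (Fin d) (Fin d) ℂ)
    (hρ : ρ.PosSemidef) (hρtr : ρ.trace = 1)
    (hσ : σ.PosSemidef) (hσtr : σ.trace = 1)
    (m n : ℕ) (hm : 1 ≤ m) (hn : 1 ≤ n) (k : ℕ) (hk : k = min m n)
    (σhat ρhat : Ω → Matrix (Fin d) (Fin d) ℂ)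
    (hmeas₁ : Measurable fun ω => fun i j => σhat ω i j)
    (hmeas₂ : Measurable fun ω => fun i j => ρhat ω i j)
    (hpsd₁ : ∀ ω, (σhat ω).PosSemidef) (htr₁ : ∀ ω, (σhat ω).trace = 1)
    (hpsd₂ : ∀ ω, (ρhat ω).PosSemidef) (htr₂ : ∀ ω, (ρhat ω).trace = 1)
    (hconc₁ : ∀ δ ∈ Set.Ioo (0 : ℝ) 1,
      μ {ω | traceNorm (σhat ω - σ) ≥ δ} ≤
        ENNReal.ofReal ((d : ℝ) * Real.exp (-(m : ℝ) * δ ^ 2 / (86 * d ^ 3))))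
    (hconc₂ : ∀ δ ∈ Set.Ioo (0 : ℝ) 1,
      μ {ω | traceNorm (ρhat ω - ρ) ≥ δ} ≤
        ENNReal.ofReal ((d : ℝ) * Real.exp (-(n : ℝ) * δ ^ 2 / (86 * d ^ 3))))
    (α : ℝ) (hα : α ∈ Set.Ioo (0 : ℝ) 1) (hdα : α ≤ 2 * d)
    (c : ℝ) (hc : c = Real.sqrt (344 * d ^ 3 * Real.log (2 * d / α) / k)) (hc1 : c / 2 < 1) :
    (σ = ρ → μ {ω | traceNorm (σhat ω - ρhat ω) > c} ≤ ENNReal.ofReal α) ∧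
    (σ ≠ ρ → c < traceNorm (ρ - σ) → (traceNorm (ρ - σ) - c) / 2 < 1 →
      μ {ω | traceNorm (σhat ω - ρhat ω) ≤ c} ≤
        ENNReal.ofReal (2 * (d : ℝ) *
          Real.exp (-(k : ℝ) * (traceNorm (ρ - σ) - c) ^ 2 / (344 * d ^ 3)))) := by
  have hdpos : (0 : ℝ) < d := by exact_mod_cast hd
  have hscale : (344 * d ^ 3 : ℝ) = 4 * (86 * d ^ 3) := by ring
  rw [hscale] at hc ⊢
  have hk0 : (0 : ℝ) < k := by exact_mod_cast hk ▸ lt_min hm hn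
  have hkm : (k : ℝ) ≤ m := by exact_mod_cast hk ▸ min_le_left m n
  have hkn : (k : ℝ) ≤ n := by exact_mod_cast hk ▸ min_le_right m n
  have hα2d : α < 2 * d := by
    have : (1 : ℝ) ≤ d := by exact_mod_cast hd
    linarith [hα.2]
  have htest := qudit_two_sample_indep_general (traceSeminorm d) hk0 hkm hkn
    (by positivity) hconc₁ hconc₂ hα.1 hα2d hc hc1
  exact ⟨htest.1, fun _ => htest.2⟩
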